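/- Let K be a field, g ≥ 1, let q₁, …, q_g ∈ K be pairwise distinct, p₁, …, p_g ∈ K, and let ℓ(λ) ∈ K(λ) be any rational function. Set β(λ) := Π_{j=1}^{g}(λ−qⱼ), let Q(λ) := −Σ_{i=1}^{g} pᵢ·Π_{j≠i}(λ−qⱼ)/(qᵢ−qⱼ) be the Lagrange polynomial with Q(qᵢ) = −pᵢ, define the matrices over K(λ): G(λ) with rows (1, 0) and (−Q(λ), β(λ)), and L(λ) with rows (0, 1) and (ℓ(λ), Σ_{j=1}^{g} 1/(λ−qⱼ)). Then L̂(λ) := G(λ)⁻¹L(λ)G(λ) − G(λ)⁻¹·∂_λG(λ) has entries L̂₁₁ = −Q(λ), L̂₁₂ = β(λ), L̂₂₂ = Q(λ), and L̂₂₁ = ∂_λ(Q(λ)/β(λ)) + ℓ(λ)/β(λ) − Q(λ)²/β(λ). -/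

import Mathlib

/-- The standard derivation `∂_λ` on rational functions, `(p/q)' = (p'q - pq')/q²`. -/
noncomputable def rfDeriv {K : Type*} [Field K] (f : RatFunc K) : RatFunc K :=
  (algebraMap (Polynomial K) (RatFunc K) (Polynomial.derivative f.num)
      * algebraMap (Polynomial K) (RatFunc K) f.denom
    - algebraMap (Polynomial K) (RatFunc K) f.num
      * algebraMap (Polynomial K) (RatFunc K) (Polynomial.derivative f.denom))
  / (algebraMap (Polynomial K) (RatFunc K) f.denom) ^ 2

/-!
The entry `Σ 1/(λ-qⱼ)` of `L` is the logarithmic derivative of `β = Π(λ-qⱼ)`. This is also the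
`(2,2)` entry of `G⁻¹G′`, so it drops out of `L̂₂₂`; in `L̂₂₁` it supplies, by the quotient rule,
the term that completes `Q′/β` to `(Q/β)′`. Neither effect depends on what `Q` is, and both take
place in any differential field.
-/

open Polynomial
open scoped Differential

/-- The differential ring structure given by an additive map satisfying the Leibniz rule.
Mathlib's `Differential` asks for a `ℤ`-linear derivation; on `RatFunc K` two `ℤ`-algebra instances
compete, so the `ℤ`-linearity is supplied here, over an abstract ring. -/
abbrev differentialOfLeibniz {R : Type*} [CommRing R] (d : R →+ R)
    (leibniz : ∀ a b, d (a * b) = a * d b + b * d a) : Differential R where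
  deriv := Derivation.mk' d.toIntLinearMap leibniz

section RationalFunctions

variable {K : Type*} [Field K]

theorem rfDeriv_algebraMap_div (a : K[X]) {b : K[X]} (hb : b ≠ 0) :
    rfDeriv (algebraMap K[X] (RatFunc K) a / algebraMap K[X] (RatFunc K) b)
      = (algebraMap K[X] (RatFunc K) (derivative a) * algebraMap K[X] (RatFunc K) b
        - algebraMap K[X] (RatFunc K) a * algebraMap K[X] (RatFunc K) (derivative b))
        / algebraMap K[X] (RatFunc K) b ^ 2 := by
  set f := algebraMap K[X] (RatFunc K) a / algebraMap K[X] (RatFunc K) b with hf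
  have cross : f.num * b = a * f.denom := (RatFunc.num_mul_eq_mul_denom_iff hb).mpr hf
  have cross_deriv : derivative f.num * b + f.num * derivative b
      = derivative a * f.denom + a * derivative f.denom := by
    simpa only [derivative_mul] using congrArg derivative cross
  have hb' := pow_ne_zero 2 (RatFunc.algebraMap_ne_zero hb)
  have hd := pow_ne_zero 2 (RatFunc.algebraMap_ne_zero f.denom_ne_zero)
  rw [rfDeriv, div_eq_div_iff hd hb']
  simp only [← map_mul, ← map_sub, ← map_pow]
  congr 1
  linear_combination (b * f.denom) * cross_deriv
    - (b * derivative f.denom + f.denom * derivative b) * cross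

theorem rfDeriv_algebraMap (a : K[X]) :
    rfDeriv (algebraMap K[X] (RatFunc K) a) = algebraMap K[X] (RatFunc K) (derivative a) := by
  simpa using rfDeriv_algebraMap_div a one_ne_zero

theorem rfDeriv_add (f h : RatFunc K) : rfDeriv (f + h) = rfDeriv f + rfDeriv h := by
  induction f using RatFunc.induction_on with | _ a b hb
  induction h using RatFunc.induction_on with | _ c d hd
  have hb' := RatFunc.algebraMap_ne_zero hb
  have hd' := RatFunc.algebraMap_ne_zero hd
  rw [div_add_div _ _ hb' hd', ← map_mul, ← map_mul, ← map_mul, ← map_add,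
    rfDeriv_algebraMap_div _ (mul_ne_zero hb hd), rfDeriv_algebraMap_div a hb,
    rfDeriv_algebraMap_div c hd]
  simp only [derivative_mul, map_add, map_mul]
  field

theorem rfDeriv_mul (f h : RatFunc K) : rfDeriv (f * h) = f * rfDeriv h + h * rfDeriv f := by
  induction f using RatFunc.induction_on with | _ a b hb
  induction h using RatFunc.induction_on with | _ c d hd
  have hb' := RatFunc.algebraMap_ne_zero hb
  have hd' := RatFunc.algebraMap_ne_zero hd
  rw [div_mul_div_comm, ← map_mul, ← map_mul, rfDeriv_algebraMap_div _ (mul_ne_zero hb hd),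
    rfDeriv_algebraMap_div a hb, rfDeriv_algebraMap_div c hd]
  simp only [derivative_mul, map_add, map_mul]
  field

theorem rfDeriv_C (c : K) : rfDeriv (RatFunc.C c) = 0 := by
  rw [← RatFunc.algebraMap_C, rfDeriv_algebraMap, derivative_C, map_zero]

theorem rfDeriv_X : rfDeriv (RatFunc.X : RatFunc K) = 1 := by
  rw [← RatFunc.algebraMap_X, rfDeriv_algebraMap, derivative_X, map_one]

/-- `K(λ)` as a differential field, with derivation `∂_λ`. -/
noncomputable instance : Differential (RatFunc K) :=
  differentialOfLeibniz (AddMonoidHom.mk' rfDeriv rfDeriv_add) rfDeriv_mul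

theorem deriv_eq_rfDeriv (f : RatFunc K) : f′ = rfDeriv f := rfl

theorem ratFunc_X_sub_C_ne_zero (c : K) : RatFunc.X - RatFunc.C c ≠ 0 := by
  rw [← RatFunc.algebraMap_X, ← RatFunc.algebraMap_C, ← map_sub]
  exact RatFunc.algebraMap_ne_zero (X_sub_C_ne_zero c)

theorem logDeriv_X_sub_C (c : K) :
    Differential.logDeriv (RatFunc.X - RatFunc.C c) = 1 / (RatFunc.X - RatFunc.C c) := by
  rw [Differential.logDeriv, map_sub, deriv_eq_rfDeriv, deriv_eq_rfDeriv, rfDeriv_X, rfDeriv_C,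
    sub_zero]

theorem logDeriv_prod_X_sub_C {ι : Type*} (s : Finset ι) (q : ι → K) :
    Differential.logDeriv (∏ j ∈ s, (RatFunc.X - RatFunc.C (q j)))
      = ∑ j ∈ s, 1 / (RatFunc.X - RatFunc.C (q j)) := by
  rw [Differential.logDeriv_prod _ _ _ fun j _ ↦ ratFunc_X_sub_C_ne_zero (q j)]
  simp only [logDeriv_X_sub_C]

end RationalFunctions

section Gauge

/-- The matrix `L̂ = G⁻¹LG - G⁻¹G′` of the system obtained from `Ψ′ = LΨ` by substituting
`Ψ = GΨ̂`. The inverse is `Matrix.inv`, so it is meaningful only for invertible `G`. -/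
noncomputable def gaugeTransform {n F : Type*} [Fintype n] [DecidableEq n] [CommRing F]
    [Differential F] (G L : Matrix n n F) : Matrix n n F :=
  G⁻¹ * L * G - G⁻¹ * G.map (·′)

/-- The matrix `G` taking a geometric-gauge solution `(ψ₁, ψ₂)` to the oper-gauge one,
`(ψ₁, -Qψ₁ + βψ₂)`, where `Q` and `β` are arbitrary ring elements. -/
def operGauge {R : Type*} [Ring R] (Q β : R) : Matrix (Fin 2) (Fin 2) R :=
  !![1, 0; -Q, β]

theorem operGauge_map_deriv {R : Type*} [CommRing R] [Differential R] (Q β : R) :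
    (operGauge Q β).map (·′) = !![0, 0; -Q′, β′] := by
  simp [operGauge, ← Matrix.ext_iff, Fin.forall_fin_two]

variable {F : Type*} [Field F]

theorem operGauge_inv (Q : F) {β : F} (hβ : β ≠ 0) :
    (operGauge Q β)⁻¹ = !![1, 0; Q / β, 1 / β] := by
  apply Matrix.inv_eq_left_inv
  simp [operGauge, Matrix.one_fin_two, hβ, field]

theorem gaugeTransform_operGauge_companion [Differential F] (Q ℓ : F) {β : F} (hβ : β ≠ 0) :
    gaugeTransform (operGauge Q β) !![0, 1; ℓ, Differential.logDeriv β]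
      = !![-Q, β; (Q / β)′ + ℓ / β - Q ^ 2 / β, Q] := by
  set s := Differential.logDeriv β with hs
  have conjugate : (operGauge Q β)⁻¹ * !![0, 1; ℓ, s] * operGauge Q β
      = !![-Q, β; (ℓ - Q * (Q + s)) / β, Q + s] := by
    rw [operGauge_inv Q hβ, operGauge]
    simp [field, sub_eq_add_neg]
  have derivative_term : (operGauge Q β)⁻¹ * (operGauge Q β).map (·′) = !![0, 0; -Q′ / β, s] := by
    rw [operGauge_inv Q hβ, operGauge_map_deriv, hs, Differential.logDeriv]
    simp [field]
  have quotient_rule : (Q / β)′ = Q′ / β - Q * s / β := by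
    rw [Derivation.leibniz_div, hs, Differential.logDeriv]
    simp only [smul_eq_mul]
    field
  have lower_left : (ℓ - Q * (Q + s)) / β - -Q′ / β = (Q / β)′ + ℓ / β - Q ^ 2 / β := by
    rw [quotient_rule]
    ring
  rw [gaugeTransform, conjugate, derivative_term, ← lower_left]
  simp

end Gauge

theorem geometric_lax_matrix_from_oper_gauge_general
    {K ι : Type*} [Field K] [Fintype ι] (q : ι → K) (Q ℓ : RatFunc K) :
    let β : RatFunc K := ∏ j, (RatFunc.X - RatFunc.C (q j))
    let G : Matrix (Fin 2) (Fin 2) (RatFunc K) := !![1, 0; -Q, β]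
    let L : Matrix (Fin 2) (Fin 2) (RatFunc K) :=
      !![0, 1; ℓ, ∑ j, 1 / (RatFunc.X - RatFunc.C (q j))]
    let Lhat : Matrix (Fin 2) (Fin 2) (RatFunc K) := G⁻¹ * L * G - G⁻¹ * (G.map rfDeriv)
    Lhat 0 0 = -Q ∧ Lhat 0 1 = β ∧ Lhat 1 1 = Q
      ∧ Lhat 1 0 = rfDeriv (Q / β) + ℓ / β - Q ^ 2 / β := by
  intro β G L Lhat
  have hβ : β ≠ 0 := Finset.prod_ne_zero_iff.mpr fun j _ ↦ ratFunc_X_sub_C_ne_zero (q j)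
  have hL : L = !![0, 1; ℓ, Differential.logDeriv β] := by rw [logDeriv_prod_X_sub_C]
  have hLhat : Lhat = !![-Q, β; rfDeriv (Q / β) + ℓ / β - Q ^ 2 / β, Q] :=
    calc Lhat = gaugeTransform (operGauge Q β) L := rfl
      _ = !![-Q, β; rfDeriv (Q / β) + ℓ / β - Q ^ 2 / β, Q] := by
        rw [hL, gaugeTransform_operGauge_companion Q ℓ hβ, deriv_eq_rfDeriv]
  rw [hLhat]
  exact ⟨rfl, rfl, rfl, rfl⟩

/-- **The geometric Lax matrix from the oper gauge (Proposition `hatLqp`).**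
With `β(λ) = Π(λ-qⱼ)`, `Q` the Lagrange polynomial with `Q(qᵢ) = -pᵢ`,
`G = !![1, 0; -Q, β]` and the companion-like `L = !![0, 1; ℓ, Σⱼ 1/(λ-qⱼ)]`,
the matrix `L̂ = G⁻¹LG - G⁻¹ ∂_λG` has entries `L̂₁₁ = -Q`, `L̂₁₂ = β`,
`L̂₂₂ = Q` and `L̂₂₁ = ∂_λ(Q/β) + ℓ/β - Q²/β`. -/
theorem geometric_lax_matrix_from_oper_gauge
    (K : Type*) [Field K] (g : ℕ) (hg : 1 ≤ g)
    (q : Fin g → K) (hq : Function.Injective q)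
    (p : Fin g → K) (ℓ : RatFunc K) :
    let β : RatFunc K := ∏ j : Fin g, (RatFunc.X - RatFunc.C (q j))
    let Q : RatFunc K :=
      (-∑ i : Fin g, RatFunc.C (p i) * ∏ j ∈ Finset.univ.erase i,
        (RatFunc.X - RatFunc.C (q j)) / (RatFunc.C (q i) - RatFunc.C (q j)))
    let G : Matrix (Fin 2) (Fin 2) (RatFunc K) := !![1, 0; -Q, β]
    let L : Matrix (Fin 2) (Fin 2) (RatFunc K) :=
      !![0, 1; ℓ, ∑ j : Fin g, 1 / (RatFunc.X - RatFunc.C (q j))]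
    let Lhat : Matrix (Fin 2) (Fin 2) (RatFunc K) := G⁻¹ * L * G - G⁻¹ * (G.map rfDeriv)
    Lhat 0 0 = -Q ∧ Lhat 0 1 = β ∧ Lhat 1 1 = Q
      ∧ Lhat 1 0 = rfDeriv (Q / β) + ℓ / β - Q ^ 2 / β :=
  geometric_lax_matrix_from_oper_gauge_general q _ ℓ
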